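/- arXiv:1805.03382 — 2 statements merged into one kernel-verified Lean document; each statement's English description precedes it below -/
import Mathlib

section
/- Let c > 4/3 and p3 = (2c)/3 − (1/3)*sqrt(c*(c−1)). On the triangle T define the measures μ0 = Dirac point mass 1 at (0,0), μ∂ = pushforward of (2/c)·(Lebesgue measure on [0,c]) under t ↦ (t, 1 − t/c) (the boundary measure on the hypotenuse with line density 2/sqrt(1+c^2) per arclength), and μs = (6/c) times Lebesgue measure restricted to T. Partition T into R1 = {v ∈ T : 0 ≥ v1/c + v2 − 2/3 and 0 ≥ v1 + v2 − p3}, R2 = {v ∈ T : v1/c + v2 − 2/3 > 0 and v1/c + v2 − 2/3 ≥ v1 + v2 − p3}, and R3 = T \ (R1 ∪ R2) (the regions where the buyer prefers the items ((0,0),0), ((1/c,1),2/3), ((1,1),p3), respectively). Then the measures are balanced within each region: (μ0 + μ∂)(Ri) = μs(Ri) for each i ∈ {1,2,3}. -/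
open MeasureTheory Real

noncomputable section

/-- The triangle `T = {(v₁,v₂) : v₁ ≥ 0, v₂ ≥ 0, v₁/c + v₂ ≤ 1}`. -/
def Tri (c : ℝ) : Set (ℝ × ℝ) := {v | 0 ≤ v.1 ∧ 0 ≤ v.2 ∧ v.1 / c + v.2 ≤ 1}

lemma vol_slice (A : Set (ℝ × ℝ)) (hA : MeasurableSet A) (a b : ℝ) (hab : a ≤ b) (h : ℝ → ℝ)
    (hc : Continuous h) (hin : ∀ x ∈ Set.Icc a b, volume (Prod.mk x ⁻¹' A) = ENNReal.ofReal (h x))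
    (hnn : ∀ x ∈ Set.Icc a b, 0 ≤ h x) (hout : ∀ x, x ∉ Set.Icc a b → Prod.mk x ⁻¹' A = ∅) :
    volume A = ENNReal.ofReal (∫ x in a..b, h x) := by
  rw [Measure.volume_eq_prod, Measure.prod_apply hA]
  have h1 : (fun x => volume (Prod.mk x ⁻¹' A)) =
      (Set.Icc a b).indicator (fun x => ENNReal.ofReal (h x)) := by
    funext x
    by_cases hx : x ∈ Set.Icc a b
    · rw [Set.indicator_of_mem hx, hin x hx]
    · rw [Set.indicator_of_notMem hx, hout x hx, measure_empty]
  rw [h1, lintegral_indicator measurableSet_Icc, intervalIntegral.integral_of_le hab,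
    ← integral_Icc_eq_integral_Ioc]
  rw [ofReal_integral_eq_lintegral_ofReal]
  · exact hc.integrableOn_Icc
  · exact (ae_restrict_iff' measurableSet_Icc).2 (Filter.Eventually.of_forall hnn)

lemma int_lin (a b p q : ℝ) : ∫ x in a..b, (p - x / q) = p * (b - a) - (b ^ 2 - a ^ 2) / (2 * q) := by
  rw [intervalIntegral.integral_sub (by simp) (by
    apply Continuous.intervalIntegrable; fun_prop)]
  simp only [intervalIntegral.integral_const, intervalIntegral.integral_div, integral_id, smul_eq_mul]
  rw [div_div]; ring

lemma meas_and (p q : ℝ × ℝ → Prop) (hp : MeasurableSet {v | p v}) (hq : MeasurableSet {v | q v}) :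
    MeasurableSet {v | p v ∧ q v} := by
  have : {v | p v ∧ q v} = {v | p v} ∩ {v | q v} := by
    ext v; simp
  rw [this]; exact hp.inter hq

lemma tri_meas (c : ℝ) : MeasurableSet (Tri c) := by
  unfold Tri
  refine meas_and _ _ ?_ (meas_and _ _ ?_ ?_)
  all_goals exact measurableSet_le (by fun_prop) (by fun_prop)

lemma tri_vol (c : ℝ) (hc : 0 < c) : volume (Tri c) = ENNReal.ofReal (c / 2) := by
  rw [vol_slice (Tri c) (tri_meas c) 0 c hc.le (fun x => 1 - x / c) (by fun_prop)]
  · rw [int_lin]; congr 1; field_simp; ring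
  · rintro x ⟨h0, h1⟩
    have : Prod.mk x ⁻¹' Tri c = Set.Icc 0 (1 - x / c) := by
      ext y
      simp only [Tri, Set.mem_preimage, Set.mem_ofPred_eq, Set.mem_Icc]
      constructor
      · rintro ⟨_, h, h'⟩; exact ⟨h, by linarith⟩
      · rintro ⟨h, h'⟩; exact ⟨h0, h, by linarith⟩
    rw [this, Real.volume_Icc]; simp
  · rintro x ⟨h0, h1⟩
    have := (div_le_one hc).2 h1
    linarith
  · intro x hx
    ext y
    simp only [Tri, Set.mem_preimage, Set.mem_ofPred_eq, Set.mem_empty_iff_false, iff_false]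
    rintro ⟨h, h2, h3⟩
    exact hx ⟨h, (div_le_one hc).1 (by linarith)⟩

lemma bdry (c : ℝ) (R : Set (ℝ × ℝ)) (hR : MeasurableSet R) :
    Measure.map (fun t : ℝ => (t, 1 - t / c))
        (ENNReal.ofReal (2 / c) • volume.restrict (Set.Icc (0 : ℝ) c)) R
    = ENNReal.ofReal (2 / c) * volume ((fun t : ℝ => (t, 1 - t / c)) ⁻¹' R ∩ Set.Icc 0 c) := by
  have hm : Measurable (fun t : ℝ => (t, 1 - t / c)) := by fun_prop
  rw [Measure.map_apply hm hR, Measure.smul_apply, Measure.restrict_apply (hm hR), smul_eq_mul]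

lemma core (c r p3 : ℝ) (hc : 1 < c) (hr : 0 < r) (hr2 : r < 2) (hrc : r ^ 2 * (c - 1) = c)
    (hp : p3 = (2 * c - r * (c - 1)) / 3) :
    let μ0 : Measure (ℝ × ℝ) := Measure.dirac ((0 : ℝ), (0 : ℝ))
    let μb : Measure (ℝ × ℝ) :=
      Measure.map (fun t : ℝ => (t, 1 - t / c))
        (ENNReal.ofReal (2 / c) • volume.restrict (Set.Icc (0 : ℝ) c))
    let μs : Measure (ℝ × ℝ) := ENNReal.ofReal (6 / c) • volume.restrict (Tri c)
    let R1 : Set (ℝ × ℝ) :=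
      {v ∈ Tri c | v.1 / c + v.2 - 2 / 3 ≤ 0 ∧ v.1 + v.2 - p3 ≤ 0}
    let R2 : Set (ℝ × ℝ) :=
      {v ∈ Tri c | 0 < v.1 / c + v.2 - 2 / 3 ∧ v.1 + v.2 - p3 ≤ v.1 / c + v.2 - 2 / 3}
    let R3 : Set (ℝ × ℝ) := Tri c \ (R1 ∪ R2)
    (μ0 + μb) R1 = μs R1 ∧ (μ0 + μb) R2 = μs R2 ∧ (μ0 + μb) R3 = μs R3 := by
  intro μ0 μb μs R1 R2 R3
  have c0 : 0 < c := by linarith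
  have mT := tri_meas c
  have m1 : MeasurableSet R1 := by
    refine meas_and _ _ mT (meas_and _ _ ?_ ?_)
    · exact measurableSet_le (by fun_prop) (by fun_prop)
    · exact measurableSet_le (by fun_prop) (by fun_prop)
  have m2 : MeasurableSet R2 := by
    refine meas_and _ _ mT (meas_and _ _ ?_ ?_)
    · exact measurableSet_lt (by fun_prop) (by fun_prop)
    · exact measurableSet_le (by fun_prop) (by fun_prop)
  have m3 : MeasurableSet R3 := mT.diff (m1.union m2)
  obtain ⟨z, hz⟩ : ∃ z, z = c * (2 - r) / 3 := ⟨_, rfl⟩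
  have z0 : 0 < z := by rw [hz]; apply div_pos (mul_pos c0 (by linarith)); norm_num
  have hzc : z / c = (2 - r) / 3 := by rw [hz]; field_simp
  have hpz : p3 - z = r / 3 := by rw [hp, hz]; ring
  have zltc : z < c := by
    rw [← div_lt_one c0, hzc]; linarith
  -- comparison of the two lines
  have key : ∀ x, (p3 - x) - (2 / 3 - x / c) = (z - x) * ((c - 1) / c) := by
    intro x
    rw [hz, hp]; field_simp; ring
  have hpos : 0 < (c - 1) / c := div_pos (by linarith) c0
  have keyle : ∀ x, x ≤ z ↔ 2 / 3 - x / c ≤ p3 - x := by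
    intro x
    rw [← sub_nonneg (a := p3 - x), key, mul_nonneg_iff_of_pos_right hpos, sub_nonneg]
  have s1 : R1 ⊆ Tri c := fun v hv => hv.1
  have s2 : R2 ⊆ Tri c := fun v hv => hv.1
  have sv : ∀ R, MeasurableSet R → R ⊆ Tri c → μs R = ENNReal.ofReal (6 / c) * volume R := by
    intro R hR hs
    simp only [μs]
    rw [Measure.smul_apply, Measure.restrict_apply hR, Set.inter_eq_left.2 hs, smul_eq_mul]
  have o0 : ((0 : ℝ), (0 : ℝ)) ∈ R1 := by
    refine ⟨⟨le_rfl, le_rfl, by simp⟩, by norm_num, ?_⟩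
    simp only; linarith
  have e1 : (μ0 + μb) R1 = 1 := by
    simp only [μ0, μb, Measure.add_apply]
    rw [bdry c R1 m1, Measure.dirac_apply' _ m1]
    have : (fun t : ℝ => (t, 1 - t / c)) ⁻¹' R1 = ∅ := by
      ext t
      simp only [R1, Set.mem_preimage, Set.mem_ofPred_eq, Set.mem_empty_iff_false, iff_false]
      rintro ⟨_, h, _⟩
      linarith
    rw [this]; simp [o0]
  have v1 : volume R1 = ENNReal.ofReal (c / 6) := by
    rw [vol_slice R1 m1 0 p3 (by linarith) (fun x => min (2 / 3 - x / c) (p3 - x)) (by fun_prop)]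
    · rw [← intervalIntegral.integral_add_adjacent_intervals (b := z)
        (by apply Continuous.intervalIntegrable; fun_prop)
        (by apply Continuous.intervalIntegrable; fun_prop)]
      have i1 : ∫ x in (0:ℝ)..z, min (2 / 3 - x / c) (p3 - x) = ∫ x in (0:ℝ)..z, (2 / 3 - x / c) := by
        apply intervalIntegral.integral_congr
        intro x hx
        rw [Set.uIcc_of_le z0.le] at hx
        exact min_eq_left ((keyle x).1 hx.2)
      have i2 : ∫ x in z..p3, min (2 / 3 - x / c) (p3 - x) = ∫ x in z..p3, (p3 - x / 1) := by
        apply intervalIntegral.integral_congr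
        intro x hx
        rw [Set.uIcc_of_le (by linarith)] at hx
        simp only [div_one]
        apply min_eq_right
        have := mul_nonneg (sub_nonneg.2 hx.1) hpos.le
        have := key x
        linarith
      rw [i1, i2, int_lin, int_lin]
      congr 1
      have hp' : p3 = z + r / 3 := by linarith
      have hz2 : z ^ 2 / (2 * c) = z * (z / c) / 2 := by field_simp
      rw [zero_pow two_ne_zero, sub_zero, sub_zero, hz2, hzc, hp', hz]
      linear_combination (-1 / 18 : ℝ) * hrc
    · rintro x ⟨h0, h1⟩
      have : Prod.mk x ⁻¹' R1 = Set.Icc 0 (min (2 / 3 - x / c) (p3 - x)) := by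
        ext y
        simp only [R1, Tri, Set.mem_preimage, Set.mem_ofPred_eq, Set.mem_Icc, le_min_iff]
        constructor
        · rintro ⟨⟨_, h, _⟩, h2, h3⟩; exact ⟨h, by linarith, by linarith⟩
        · rintro ⟨h, h2, h3⟩; exact ⟨⟨h0, h, by linarith⟩, by linarith, by linarith⟩
      rw [this, Real.volume_Icc, sub_zero]
    · rintro x ⟨h0, h1⟩
      have hpc : p3 / c ≤ 2 / 3 := by
        rw [div_le_iff₀ c0, hp]
        nlinarith [mul_pos hr (sub_pos.2 hc)]
      have : x / c ≤ p3 / c := by gcongr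
      exact le_min (by linarith) (by linarith)
    · intro x hx
      ext y
      simp only [R1, Tri, Set.mem_preimage, Set.mem_ofPred_eq, Set.mem_empty_iff_false, iff_false]
      rintro ⟨⟨h, h2, h3⟩, h4, h5⟩
      exact hx ⟨h, by linarith⟩
  have f1 : μs R1 = 1 := by
    rw [sv R1 m1 s1, v1, ← ENNReal.ofReal_mul (by positivity)]
    rw [show 6 / c * (c / 6) = 1 by field_simp, ENNReal.ofReal_one]
  have e2 : (μ0 + μb) R2 = ENNReal.ofReal (2 / c * z) := by
    simp only [μ0, μb, Measure.add_apply]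
    rw [bdry c R2 m2, Measure.dirac_apply' _ m2]
    have : (fun t : ℝ => (t, 1 - t / c)) ⁻¹' R2 ∩ Set.Icc 0 c = Set.Icc 0 z := by
      ext t
      simp only [R2, Tri, Set.mem_preimage, Set.mem_ofPred_eq, Set.mem_inter_iff, Set.mem_Icc, keyle t]
      constructor
      · rintro ⟨⟨_, h, h'⟩, h2, _⟩
        exact ⟨h2, by linarith⟩
      · rintro ⟨h, h'⟩
        have h3 := (keyle t).2 h'
        have h4 : t / c ≤ 1 := (div_le_one c0).2 (by linarith)
        exact ⟨⟨⟨h, by linarith, by linarith⟩, by linarith, by linarith⟩, h, by linarith⟩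
    have o2 : ((0 : ℝ), (0 : ℝ)) ∉ R2 := by
      rintro ⟨_, h, _⟩
      norm_num at h
    rw [this, Set.indicator_of_notMem o2, Real.volume_Icc, zero_add, sub_zero,
      ← ENNReal.ofReal_mul (by positivity)]
  have v2 : volume R2 = ENNReal.ofReal (z / 3) := by
    rw [vol_slice R2 m2 0 z z0.le (fun x => 1 / 3) (by fun_prop)]
    · simp only [intervalIntegral.integral_const, smul_eq_mul]
      congr 1; ring
    · rintro x ⟨h0, h1⟩
      have hx := (keyle x).1 h1
      have hx2 : x / c ≤ z / c := by gcongr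
      have : Prod.mk x ⁻¹' R2 = Set.Ioc (2 / 3 - x / c) (1 - x / c) := by
        ext y
        simp only [R2, Tri, Set.mem_preimage, Set.mem_ofPred_eq, Set.mem_Ioc]
        constructor
        · rintro ⟨⟨_, h, _⟩, h2, h3⟩; exact ⟨by linarith, by linarith⟩
        · rintro ⟨h2, h3⟩; exact ⟨⟨h0, by linarith, by linarith⟩, by linarith, by linarith⟩
      rw [this, Real.volume_Ioc]
      congr 1; ring
    · intro x _; norm_num
    · intro x hx
      ext y
      simp only [R2, Tri, Set.mem_preimage, Set.mem_ofPred_eq, Set.mem_empty_iff_false, iff_false]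
      rintro ⟨⟨h, h2, h3⟩, h4, h5⟩
      exact hx ⟨h, (keyle x).2 (by linarith)⟩
  have f2 : μs R2 = ENNReal.ofReal (2 / c * z) := by
    rw [sv R2 m2 s2, v2, ← ENNReal.ofReal_mul (by positivity)]
    congr 1; ring
  have eT : (μ0 + μb) (Tri c) = ENNReal.ofReal 3 := by
    simp only [μ0, μb, Measure.add_apply]
    rw [bdry c _ mT, Measure.dirac_apply' _ mT]
    have : (fun t : ℝ => (t, 1 - t / c)) ⁻¹' (Tri c) ∩ Set.Icc 0 c = Set.Icc 0 c := by
      apply Set.inter_eq_right.2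
      rintro t ⟨h, h'⟩
      have h4 : t / c ≤ 1 := (div_le_one c0).2 (by linarith)
      simp only [Tri, Set.mem_preimage, Set.mem_ofPred_eq]
      exact ⟨h, by linarith, by linarith⟩
    rw [this, Set.indicator_of_mem (s1 o0), Real.volume_Icc, sub_zero,
      ← ENNReal.ofReal_mul (by positivity), show 2 / c * c = 2 by field_simp]
    simp only [Pi.one_apply]
    rw [← ENNReal.ofReal_one, ← ENNReal.ofReal_add (by norm_num) (by norm_num)]
    norm_num
  have fT : μs (Tri c) = ENNReal.ofReal 3 := by
    rw [sv _ mT subset_rfl, tri_vol c c0, ← ENNReal.ofReal_mul (by positivity)]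
    congr 1; field_simp; norm_num
  have hd : Disjoint R1 R2 := by
    rw [Set.disjoint_left]
    rintro v ⟨_, h, _⟩ ⟨_, h', _⟩
    linarith
  have g1 := e1.trans f1.symm
  have g2 := e2.trans f2.symm
  refine ⟨g1, g2, ?_⟩
  have hu : (μ0 + μb) (R1 ∪ R2) = μs (R1 ∪ R2) := by
    rw [measure_union hd m2, measure_union hd m2, g1, g2]
  have hfin : μs (R1 ∪ R2) ≠ ⊤ := by
    rw [measure_union hd m2, f1, f2]
    simp
  rw [measure_diff (Set.union_subset s1 s2) (m1.union m2).nullMeasurableSet (hu ▸ hfin),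
    measure_diff (Set.union_subset s1 s2) (m1.union m2).nullMeasurableSet hfin, hu, eT, fT]

/-- for `c > 4/3`, the transformed measures `μ₀ + μ∂` and `μs`
of Daskalakis–Deckelbaum–Tzamos are balanced within each of the three
best-response regions `R₁, R₂, R₃` of the optimal menu. -/
theorem measures_balanced_in_regions (c : ℝ) (hc : 4 / 3 < c) :
    let p3 : ℝ := 2 * c / 3 - Real.sqrt (c * (c - 1)) / 3
    let μ0 : Measure (ℝ × ℝ) := Measure.dirac ((0 : ℝ), (0 : ℝ))
    let μb : Measure (ℝ × ℝ) :=
      Measure.map (fun t : ℝ => (t, 1 - t / c))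
        (ENNReal.ofReal (2 / c) • volume.restrict (Set.Icc (0 : ℝ) c))
    let μs : Measure (ℝ × ℝ) := ENNReal.ofReal (6 / c) • volume.restrict (Tri c)
    let R1 : Set (ℝ × ℝ) :=
      {v ∈ Tri c | v.1 / c + v.2 - 2 / 3 ≤ 0 ∧ v.1 + v.2 - p3 ≤ 0}
    let R2 : Set (ℝ × ℝ) :=
      {v ∈ Tri c | 0 < v.1 / c + v.2 - 2 / 3 ∧ v.1 + v.2 - p3 ≤ v.1 / c + v.2 - 2 / 3}
    let R3 : Set (ℝ × ℝ) := Tri c \ (R1 ∪ R2)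
    (μ0 + μb) R1 = μs R1 ∧ (μ0 + μb) R2 = μs R2 ∧ (μ0 + μb) R3 = μs R3 := by
  have h1 : 0 < c - 1 := by linarith
  have hs : 0 < Real.sqrt (c * (c - 1)) := Real.sqrt_pos.2 (mul_pos (by linarith) h1)
  have hsq : Real.sqrt (c * (c - 1)) ^ 2 = c * (c - 1) :=
    Real.sq_sqrt (mul_pos (by linarith) h1).le
  refine core c (Real.sqrt (c * (c - 1)) / (c - 1)) _ (by linarith) (div_pos hs h1) ?_ ?_ ?_
  · rw [div_lt_iff₀ h1]
    nlinarith
  · rw [div_pow, hsq]; field_simp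
  · field_simp
end
end

section
/- Let c > 4/3, p3 = (2c)/3 − (1/3)*sqrt(c*(c−1)), xD = (2c)/3 − (1/3)*sqrt(c*(c−1)) − (1/3)*sqrt(c/(c−1)), R3 = {v ∈ T : v1 + v2 − p3 ≥ 0 and v1 + v2 − p3 ≥ v1/c + v2 − 2/3}, ν+ the pushforward of (2/c)·(Lebesgue measure on [xD, c]) under t ↦ (t, 1 − t/c), and ν− equal to (6/c) times Lebesgue measure restricted to R3. Then for every point v on the segment {(t, 1 − t/c) : xD ≤ t ≤ c} there exists a line ℓ through v with nonnegative slope (or a vertical line) such that the subset of R3 lying weakly above ℓ has equal ν+ measure and ν− measure. -/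
open MeasureTheory Real

noncomputable section

lemma aux_cl_and {p q : ℝ × ℝ → Prop} (hp : IsClosed {x | p x}) (hq : IsClosed {x | q x}) :
    IsClosed {x | p x ∧ q x} := hp.inter hq

lemma aux_ms_and {R : Set (ℝ × ℝ)} {q : ℝ × ℝ → Prop} (hp : MeasurableSet R)
    (hq : IsClosed {x | q x}) : MeasurableSet {x | x ∈ R ∧ q x} := hp.inter hq.measurableSet

lemma aux_int_max (m a b : ℝ) (hab : a ≤ b) :
    ∫ x in a..b, max (m - x) 0 = ((max (m - a) 0) ^ 2 - (max (m - b) 0) ^ 2) / 2 := by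
  have h1 : ∀ a b : ℝ, a ≤ b → b ≤ m → ∫ x in a..b, max (m - x) 0 = ((m - a) ^ 2 - (m - b) ^ 2) / 2 := by
    intro a b hab hb
    have : ∫ x in a..b, max (m - x) 0 = ∫ x in a..b, (m - x) := by
      apply intervalIntegral.integral_congr
      intro x hx
      rw [Set.uIcc_of_le hab] at hx
      exact max_eq_left (by linarith [hx.2])
    rw [this, intervalIntegral.integral_sub (by simp) (by simp)]
    simp
    ring
  have h2 : ∀ a b : ℝ, a ≤ b → m ≤ a → ∫ x in a..b, max (m - x) 0 = 0 := by
    intro a b hab hb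
    have : ∫ x in a..b, max (m - x) 0 = ∫ x in a..b, (0:ℝ) := by
      apply intervalIntegral.integral_congr
      intro x hx
      rw [Set.uIcc_of_le hab] at hx
      exact max_eq_right (by linarith [hx.1])
    rw [this]; simp
  have hi : ∀ a b : ℝ, IntervalIntegrable (fun x => max (m - x) 0) volume a b := fun a b =>
    Continuous.intervalIntegrable (by fun_prop) _ _
  rcases le_total m a with h | h
  · rw [h2 a b hab h, max_eq_right (by linarith), max_eq_right (by linarith)]; ring
  rcases le_total b m with h' | h'
  · rw [h1 a b hab h', max_eq_left (by linarith), max_eq_left (by linarith)]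
  · rw [← intervalIntegral.integral_add_adjacent_intervals (hi a m) (hi m b), h1 a m h le_rfl,
      h2 m b h' le_rfl, max_eq_left (by linarith), max_eq_right (by linarith)]; ring

lemma aux_region (f g : ℝ → ℝ) (hf : Continuous f) (hg : Continuous g) (a b : ℝ) (hab : a ≤ b)
    (h : ∀ x ∈ Set.Icc a b, f x ≤ g x) :
    volume {p : ℝ × ℝ | p.1 ∈ Set.Icc a b ∧ f p.1 ≤ p.2 ∧ p.2 ≤ g p.1}
      = ENNReal.ofReal (∫ x in a..b, (g x - f x)) := by
  have hm : MeasurableSet {p : ℝ × ℝ | p.1 ∈ Set.Icc a b ∧ f p.1 ≤ p.2 ∧ p.2 ≤ g p.1} := by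
    apply IsClosed.measurableSet
    refine aux_cl_and (isClosed_Icc.preimage continuous_fst) (aux_cl_and ?_ ?_)
    · exact isClosed_le (by fun_prop) (by fun_prop)
    · exact isClosed_le (by fun_prop) (by fun_prop)
  rw [Measure.volume_eq_prod, Measure.prod_apply hm]
  have : ∀ x, volume (Prod.mk x ⁻¹' {p : ℝ × ℝ | p.1 ∈ Set.Icc a b ∧ f p.1 ≤ p.2 ∧ p.2 ≤ g p.1})
      = (Set.Icc a b).indicator (fun x => ENNReal.ofReal (g x - f x)) x := by
    intro x
    by_cases hx : x ∈ Set.Icc a b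
    · rw [Set.indicator_of_mem hx, ← Real.volume_Icc]
      congr 1
      ext y
      simp [hx.1, hx.2]
    · rw [Set.indicator_of_notMem hx]
      have : (Prod.mk x ⁻¹' {p : ℝ × ℝ | p.1 ∈ Set.Icc a b ∧ f p.1 ≤ p.2 ∧ p.2 ≤ g p.1}) = ∅ := by
        ext y
        simp only [Set.mem_preimage, Set.mem_ofPred_eq, Set.mem_empty_iff_false, iff_false]
        exact fun h => hx h.1
      rw [this]; simp
  simp_rw [this]
  rw [lintegral_indicator measurableSet_Icc, intervalIntegral.integral_of_le hab,
    ← integral_Icc_eq_integral_Ioc, ofReal_integral_eq_lintegral_ofReal]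
  · exact (Continuous.integrableOn_Icc (by fun_prop))
  · filter_upwards [ae_restrict_mem measurableSet_Icc] with x hx
    simpa using h x hx

lemma aux_line (a b t s : ℝ) (hab : 0 ≤ a ∧ 0 ≤ b ∧ a + b = 1) :
    ∀ᵐ w : ℝ × ℝ, a * (w.1 - t) ≠ b * (w.2 - s) := by
  have hm : MeasurableSet {w : ℝ × ℝ | a * (w.1 - t) = b * (w.2 - s)} :=
    (isClosed_eq (by fun_prop) (by fun_prop)).measurableSet
  have : volume {w : ℝ × ℝ | a * (w.1 - t) = b * (w.2 - s)} = 0 := by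
    rw [Measure.volume_eq_prod, Measure.measure_prod_null hm]
    have hne : ∀ᵐ x : ℝ, x ≠ t := by
      simp [ae_iff]
    filter_upwards [hne] with x hx
    by_cases hb : b = 0
    · have ha : a = 1 := by linarith
      have : (Prod.mk x ⁻¹' {w : ℝ × ℝ | a * (w.1 - t) = b * (w.2 - s)}) = ∅ := by
        ext y
        simp [ha, hb, sub_eq_zero, hx]
      rw [this]; simp
    · refine measure_mono_null (t := {s + a * (x - t) / b}) ?_ (by simp)
      intro y hy
      simp only [Set.mem_preimage, Set.mem_ofPred_eq] at hy
      simp only [Set.mem_singleton_iff]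
      field_simp
      linarith
  simpa [ae_iff] using this

lemma aux_ivt (R : Set (ℝ × ℝ)) (hR : MeasurableSet R) (hfin : volume R ≠ ⊤) (t s A : ℝ)
    (h0 : volume.real {w ∈ R | 0 * (w.1 - t) ≤ 1 * (w.2 - s)} ≤ A)
    (h1 : A ≤ volume.real {w ∈ R | 1 * (w.1 - t) ≤ 0 * (w.2 - s)}) :
    ∃ a b : ℝ, 0 ≤ a ∧ 0 ≤ b ∧ a + b = 1 ∧
      volume.real {w ∈ R | a * (w.1 - t) ≤ b * (w.2 - s)} = A := by
  let S : ℝ → Set (ℝ × ℝ) := fun θ => {w ∈ R | θ * (w.1 - t) ≤ (1 - θ) * (w.2 - s)}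
  have hS : ∀ θ, MeasurableSet (S θ) := fun θ =>
    aux_ms_and hR (isClosed_le (by fun_prop) (by fun_prop))
  let g : ℝ → ℝ := fun θ => ∫ w, (S θ).indicator (fun _ => (1:ℝ)) w
  have hg : ∀ θ, g θ = volume.real (S θ) := fun θ => by
    simp only [g]; rw [integral_indicator (hS θ)]; simp
  have hcont : ContinuousOn g (Set.Icc 0 1) := by
    intro θ hθ
    apply ContinuousAt.continuousWithinAt
    apply continuousAt_of_dominated (bound := R.indicator (fun _ => (1:ℝ)))
    · exact Filter.Eventually.of_forall fun θ =>
        (measurable_const.indicator (hS θ)).aestronglyMeasurable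
    · refine Filter.Eventually.of_forall fun θ => Filter.Eventually.of_forall fun w => ?_
      rw [Real.norm_of_nonneg (Set.indicator_nonneg (fun _ _ => zero_le_one) _)]
      exact Set.indicator_le_indicator_of_subset (fun w hw => hw.1) (fun _ => zero_le_one) _
    · exact (integrable_indicator_iff hR).2 (integrableOn_const hfin)
    · filter_upwards [aux_line θ (1 - θ) t s ⟨hθ.1, by linarith [hθ.2], by ring⟩] with w hw
      have key : ∀ᶠ η in nhds θ, (w ∈ S η ↔ w ∈ S θ) := by
        rcases lt_or_gt_of_ne hw with h | h
        · have : ∀ᶠ η in nhds θ, η * (w.1 - t) < (1 - η) * (w.2 - s) :=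
            (isOpen_lt (f := fun η : ℝ => η * (w.1 - t)) (g := fun η : ℝ => (1 - η) * (w.2 - s))
              (by fun_prop) (by fun_prop)).mem_nhds h
          filter_upwards [this] with η hη
          simp only [S, Set.mem_ofPred_eq, hη.le, h.le]
        · have : ∀ᶠ η in nhds θ, (1 - η) * (w.2 - s) < η * (w.1 - t) :=
            (isOpen_lt (g := fun η : ℝ => η * (w.1 - t)) (f := fun η : ℝ => (1 - η) * (w.2 - s))
              (by fun_prop) (by fun_prop)).mem_nhds h
          filter_upwards [this] with η hη
          simp only [S, Set.mem_ofPred_eq, not_le.2 hη, not_le.2 h]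
      have : (fun η => (S η).indicator (fun _ => (1:ℝ)) w) =ᶠ[nhds θ]
          fun _ => (S θ).indicator (fun _ => (1:ℝ)) w := by
        filter_upwards [key] with η hη
        by_cases h : w ∈ S θ
        · rw [Set.indicator_of_mem h, Set.indicator_of_mem (hη.2 h)]
        · rw [Set.indicator_of_notMem h, Set.indicator_of_notMem (fun h' => h (hη.1 h'))]
      exact continuousAt_const.congr this.symm
  have := intermediate_value_Icc (zero_le_one) hcont
  obtain ⟨θ, hθ, he⟩ := this (show A ∈ Set.Icc (g 0) (g 1) by
    rw [hg, hg]
    simp only [S, sub_zero, sub_self]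
    exact ⟨h0, h1⟩)
  exact ⟨θ, 1 - θ, hθ.1, by linarith [hθ.2], by ring, by rw [← he, hg]⟩

lemma aux_J (c p d t k : ℝ) (hdt : d ≤ t) :
    ∫ x in d..t, ((1 - x / c) - max (p - x) k) = (t - d) - (t ^ 2 - d ^ 2) / (2 * c) - k * (t - d)
      - ((max (p - k - d) 0) ^ 2 - (max (p - k - t) 0) ^ 2) / 2 := by
  have e : ∀ x, (1 - x / c) - max (p - x) k = (1 - x / c - k) - max (p - k - x) 0 := by
    intro x
    have : max (p - x) k = max (p - k - x) 0 + k := by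
      rw [← max_add_add_right]; congr 1 <;> ring
    rw [this]; ring
  simp_rw [e]
  rw [intervalIntegral.integral_sub (Continuous.intervalIntegrable (by fun_prop) _ _)
    (Continuous.intervalIntegrable (by fun_prop) _ _), aux_int_max _ _ _ hdt,
    intervalIntegral.integral_sub (Continuous.intervalIntegrable (by fun_prop) _ _)
    (Continuous.intervalIntegrable (by fun_prop) _ _),
    intervalIntegral.integral_sub (Continuous.intervalIntegrable (by fun_prop) _ _)
    (Continuous.intervalIntegrable (by fun_prop) _ _), intervalIntegral.integral_div]
  simp
  ring

lemma aux_vert (c r u : ℝ) (hc : 4 / 3 < c) (hr : 0 < r) (hrc : r ^ 2 * (c - 1) = c)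
    (hu : 0 ≤ u) (hu' : u ≤ c * (1 + r) / 3) :
    u / 3 ≤ (1 + r) * u / 3 - u ^ 2 / (2 * c)
      - ((max (r / 3) 0) ^ 2 - (max (r / 3 - u) 0) ^ 2) / 2 := by
  rw [max_eq_left (by linarith : 0 ≤ r / 3)]
  rcases le_total u (r / 3) with h | h
  · rw [max_eq_left (by linarith)]
    have : u ^ 2 / (2 * c) ≤ u ^ 2 / 2 := by
      apply div_le_div_of_nonneg_left (by positivity) (by norm_num) (by linarith)
    nlinarith
  · rw [max_eq_right (by linarith)]
    have : u ^ 2 / (2 * c) ≤ r * u / 3 - r ^ 2 / 18 := by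
      rw [div_le_iff₀ (by linarith)]
      have h2 : r / 3 ≤ u := h
      have h3 : 0 ≤ (u - (2 * r * c - c * (1 + r)) / 3) := by
        have : r * c - c ≤ r := by
          have : (r * (c - 1)) * r = c := by nlinarith
          have : r * (c - 1) ≤ c := by
            by_contra hcon
            push Not at hcon
            have : r > 1 := by nlinarith
            nlinarith
          linarith
        linarith
      nlinarith [mul_nonneg h3 (sub_nonneg.2 hu')]
    linarith

lemma aux_horiz (c r u : ℝ) (hc : 4 / 3 < c) (hr : 0 < r) (hrc : r ^ 2 * (c - 1) = c)
    (hu : 0 ≤ u) (hu' : u ≤ c * (1 + r) / 3) :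
    u ^ 2 / (2 * c) - ((max (u / c - 1 / 3) 0) ^ 2 - (max (u / c - 1 / 3 - u) 0) ^ 2) / 2
      ≤ u / 3 := by
  have hc0 : 0 < c := by linarith
  obtain ⟨z, rfl⟩ : ∃ z, u = c * z := ⟨u / c, by field_simp⟩
  have e1 : c * z / c = z := by field_simp
  have e2 : (c * z) ^ 2 / (2 * c) = c * z ^ 2 / 2 := by field_simp
  have hz : 0 ≤ z := by by_contra h; push Not at h; nlinarith
  have hz' : z ≤ (1 + r) / 3 := by
    by_contra h; push Not at h; nlinarith
  rw [e1, e2, max_eq_right (by nlinarith : z - 1 / 3 - c * z ≤ 0)]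
  rcases le_total z (1 / 3) with h | h
  · rw [max_eq_right (by linarith)]
    nlinarith [mul_nonneg hc0.le (mul_nonneg hz (sub_nonneg.2 h)), mul_nonneg hc0.le hz]
  · rw [max_eq_left (by linarith)]
    have h3 : 0 ≤ (c - 1) * (z - 1 / 3) + (c - 1) * r / 3 := by
      have := mul_nonneg (by linarith : 0 ≤ c - 1) (sub_nonneg.2 h)
      have := mul_nonneg (by linarith : 0 ≤ c - 1) hr.le
      linarith
    nlinarith [mul_nonneg h3 (sub_nonneg.2 hz')]

lemma aux_main (c r d p : ℝ) (hc : 4 / 3 < c) (hr : 0 < r) (hrc : r ^ 2 * (c - 1) = c)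
    (hd : d = c - c * (1 + r) / 3) (hp : p = d + r / 3) (R : Set (ℝ × ℝ))
    (hR : R = {v | d ≤ v.1 ∧ 0 ≤ v.2 ∧ v.1 / c + v.2 ≤ 1 ∧ p ≤ v.1 + v.2})
    (t : ℝ) (ht : t ∈ Set.Icc d c) :
    ∃ a b : ℝ, 0 ≤ a ∧ 0 ≤ b ∧ a + b = 1 ∧
      volume.real {w ∈ R | a * (w.1 - t) ≤ b * (w.2 - (1 - t / c))} = (t - d) / 3 := by
  have hc0 : 0 < c := by linarith
  have hcl : IsClosed R := by
    rw [hR]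
    refine aux_cl_and (isClosed_le (by fun_prop) (by fun_prop)) (aux_cl_and ?_
      (aux_cl_and ?_ ?_)) <;> exact isClosed_le (by fun_prop) (by fun_prop)
  have hdc : d / c = 1 - (1 + r) / 3 := by rw [hd]; field_simp
  have htc : t / c ≤ 1 := by rw [div_le_one hc0]; exact ht.2
  -- at points of [d, t]
  have hx : ∀ x, d ≤ x → p - x ≤ 1 - x / c := by
    intro x hx
    have : (x - d) / c ≤ x - d := div_le_self (by linarith) (by linarith)
    rw [sub_div] at this
    linarith
  have hmono : ∀ x y : ℝ, x ≤ y → x / c ≤ y / c := fun x y h => by gcongr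
  have hreg : ∀ k, k ≤ 1 - t / c → volume {q : ℝ × ℝ | q.1 ∈ Set.Icc d t ∧ max (p - q.1) k ≤ q.2 ∧
      q.2 ≤ 1 - q.1 / c} = ENNReal.ofReal (∫ x in d..t, ((1 - x / c) - max (p - x) k)) := by
    intro k hk
    refine aux_region (fun x => max (p - x) k) (fun x => 1 - x / c) (by fun_prop) (by fun_prop)
      d t ht.1 ?_
    intro x hx'
    exact max_le (hx x hx'.1) (by linarith [hmono x t hx'.2])
  have hnn : ∀ k, k ≤ 1 - t / c → 0 ≤ ∫ x in d..t, ((1 - x / c) - max (p - x) k) := by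
    intro k hk
    apply intervalIntegral.integral_nonneg ht.1
    intro x hx'
    exact sub_nonneg.2 (max_le (hx x hx'.1) (by linarith [hmono x t hx'.2]))
  have hu : 0 ≤ t - d := by linarith [ht.1]
  have hu' : t - d ≤ c * (1 + r) / 3 := by linarith [ht.2]
  have hfin : volume R ≠ ⊤ := by
    apply ne_top_of_le_ne_top (b := volume (Set.Icc (d, (0:ℝ)) (c, 1 - d / c)))
    · exact isCompact_Icc.measure_lt_top.ne
    · apply measure_mono
      rw [hR]
      rintro ⟨x, y⟩ ⟨h1, h2, h3, h4⟩
      simp only at h1 h2 h3 h4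
      have : x ≤ c := by
        rw [← div_le_one hc0]; linarith
      have := hmono _ _ h1
      refine ⟨⟨h1, h2⟩, ⟨?_, ?_⟩⟩ <;> simp only <;> linarith
  apply aux_ivt R hcl.measurableSet hfin
  · have hk : 1 - t / c ≤ 1 - t / c := le_rfl
    have : {w ∈ R | 0 * (w.1 - t) ≤ 1 * (w.2 - (1 - t / c))} = {q : ℝ × ℝ | q.1 ∈ Set.Icc d t ∧
        max (p - q.1) (1 - t / c) ≤ q.2 ∧ q.2 ≤ 1 - q.1 / c} := by
      ext ⟨x, y⟩
      simp only [hR, Set.mem_ofPred_eq, Set.mem_Icc, max_le_iff]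
      constructor
      · rintro ⟨⟨h1, h2, h3, h4⟩, h5⟩
        have : x ≤ t := by
          have : x / c ≤ t / c := by linarith
          exact (div_le_div_iff_of_pos_right hc0).1 this
        refine ⟨⟨h1, this⟩, ⟨?_, ?_⟩, ?_⟩ <;> linarith
      · rintro ⟨⟨h1, h2⟩, ⟨h3, h4⟩, h5⟩
        refine ⟨⟨h1, ?_, ?_, ?_⟩, ?_⟩ <;> linarith
    rw [this, measureReal_def, hreg _ hk, ENNReal.toReal_ofReal (hnn _ hk), aux_J _ _ _ _ _ ht.1]
    have key := aux_horiz c r (t - d) hc hr hrc hu hu'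
    have e1 : p - (1 - t / c) - d = (t - d) / c - 1 / 3 := by
      rw [sub_div, hdc, hp]; ring
    have e2 : p - (1 - t / c) - t = (t - d) / c - 1 / 3 - (t - d) := by
      rw [sub_div, hdc, hp]; ring
    rw [e1, e2]
    have e3 : (t - d) - (t ^ 2 - d ^ 2) / (2 * c) - (1 - t / c) * (t - d)
      = (t - d) ^ 2 / (2 * c) := by field_simp; ring
    rw [e3]
    exact key
  · have hk : 0 ≤ 1 - t / c := by linarith
    have : {w ∈ R | 1 * (w.1 - t) ≤ 0 * (w.2 - (1 - t / c))} = {q : ℝ × ℝ | q.1 ∈ Set.Icc d t ∧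
        max (p - q.1) 0 ≤ q.2 ∧ q.2 ≤ 1 - q.1 / c} := by
      ext ⟨x, y⟩
      simp only [hR, Set.mem_ofPred_eq, Set.mem_Icc, max_le_iff]
      constructor
      · rintro ⟨⟨h1, h2, h3, h4⟩, h5⟩
        refine ⟨⟨h1, ?_⟩, ⟨?_, ?_⟩, ?_⟩ <;> linarith
      · rintro ⟨⟨h1, h2⟩, ⟨h3, h4⟩, h5⟩
        refine ⟨⟨h1, ?_, ?_, ?_⟩, ?_⟩ <;> linarith
    rw [this, measureReal_def, hreg _ hk, ENNReal.toReal_ofReal (hnn _ hk), aux_J _ _ _ _ _ ht.1]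
    have key := aux_vert c r (t - d) hc hr hrc hu hu'
    have e1 : p - 0 - d = r / 3 := by rw [hp]; ring
    have e2 : p - 0 - t = r / 3 - (t - d) := by rw [hp]; ring
    rw [e1, e2]
    have e3 : (t - d) - (t ^ 2 - d ^ 2) / (2 * c) - 0 * (t - d)
      = (1 + r) * (t - d) / 3 - (t - d) ^ 2 / (2 * c) := by
      have : (1 + r) / 3 = 1 - d / c := by linarith
      have h2 : (1 + r) * (t - d) / 3 = (1 - d / c) * (t - d) := by rw [← this]; ring
      rw [h2]
      field_simp; ring
    rw [e3]
    exact key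

/-- for `c > 4/3` and every point `v = (t, 1 - t/c)` on the upper
boundary of `R₃`, there is a line through `v` with nonnegative slope (or a
vertical line) such that the part of `R₃` weakly above the line has equal `ν₊`
and `ν₋` measures.  The line through `v` is `{w | a*(w₁ - t) = b*(w₂ - v₂)}`
with `a, b ≥ 0` not both zero (slope `a/b`, vertical when `b = 0`), and the
region weakly above it is `{w | a*(w₁ - t) ≤ b*(w₂ - v₂)}`. -/
theorem exists_balancing_line (c : ℝ) (hc : 4 / 3 < c) :
    let p3 : ℝ := 2 * c / 3 - Real.sqrt (c * (c - 1)) / 3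
    let xD : ℝ := 2 * c / 3 - Real.sqrt (c * (c - 1)) / 3 - Real.sqrt (c / (c - 1)) / 3
    let R3 : Set (ℝ × ℝ) :=
      {v ∈ Tri c | 0 ≤ v.1 + v.2 - p3 ∧ v.1 / c + v.2 - 2 / 3 ≤ v.1 + v.2 - p3}
    let νp : Measure (ℝ × ℝ) :=
      Measure.map (fun t : ℝ => (t, 1 - t / c))
        (ENNReal.ofReal (2 / c) • volume.restrict (Set.Icc xD c))
    let νm : Measure (ℝ × ℝ) := ENNReal.ofReal (6 / c) • volume.restrict R3
    ∀ t ∈ Set.Icc xD c,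
      ∃ a b : ℝ, 0 ≤ a ∧ 0 ≤ b ∧ (a, b) ≠ ((0 : ℝ), (0 : ℝ)) ∧
        νp {w ∈ R3 | a * (w.1 - t) ≤ b * (w.2 - (1 - t / c))}
          = νm {w ∈ R3 | a * (w.1 - t) ≤ b * (w.2 - (1 - t / c))} := by
  intro p3 xD R3 νp νm t ht
  have hc0 : 0 < c := by linarith
  have hc1 : 0 < c - 1 := by linarith
  obtain ⟨r, hrdef⟩ : ∃ r, r = Real.sqrt (c / (c - 1)) := ⟨_, rfl⟩
  have hr : 0 < r := by rw [hrdef]; exact Real.sqrt_pos.2 (by positivity)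
  have hrc : r ^ 2 * (c - 1) = c := by
    rw [hrdef, Real.sq_sqrt (by positivity)]; field_simp
  have hs : Real.sqrt (c * (c - 1)) = r * (c - 1) := by
    rw [Real.sqrt_eq_iff_mul_self_eq (by positivity) (by positivity)]
    first | linear_combination (c - 1) * hrc | linear_combination -(c - 1) * hrc
  have hd : xD = c - c * (1 + r) / 3 := by
    simp only [xD]; rw [hs, ← hrdef]; ring
  have hp : p3 = xD + r / 3 := by
    simp only [xD, p3]; rw [← hrdef]; ring
  have hd0 : 0 ≤ xD := by
    have : r ≤ 2 := by
      by_contra h; push Not at h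
      have h4 : 4 < r ^ 2 := by nlinarith
      have := mul_lt_mul_of_pos_right h4 hc1
      linarith
    rw [hd]; nlinarith
  have hR : R3 = {v | xD ≤ v.1 ∧ 0 ≤ v.2 ∧ v.1 / c + v.2 ≤ 1 ∧ p3 ≤ v.1 + v.2} := by
    ext ⟨x, y⟩
    have key : x / c - 2 / 3 ≤ x - p3 ↔ xD ≤ x := by
      have e : (x - p3) - (x / c - 2 / 3) = (x - xD) * ((c - 1) / c) := by
        rw [hp, hd]; field_simp; ring
      have hpos : 0 < (c - 1) / c := by positivity
      rw [← sub_nonneg, e, mul_nonneg_iff_of_pos_right hpos, sub_nonneg]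
    simp only [R3, Tri, Set.mem_ofPred_eq]
    constructor
    · rintro ⟨⟨h1, h2, h3⟩, h4, h5⟩
      exact ⟨key.1 (by linarith), h2, h3, by linarith⟩
    · rintro ⟨h1, h2, h3, h4⟩
      exact ⟨⟨by linarith, h2, h3⟩, by linarith, by linarith [key.2 h1]⟩
  obtain ⟨a, b, ha, hb, hab, hvol⟩ := aux_main c r xD p3 hc hr hrc hd hp R3 hR t ht
  refine ⟨a, b, ha, hb, ?_, ?_⟩
  · intro h
    simp only [Prod.mk.injEq] at h
    linarith [h.1, h.2]
  have hcl : IsClosed R3 := by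
    rw [hR]
    refine aux_cl_and (isClosed_le (by fun_prop) (by fun_prop)) (aux_cl_and ?_
      (aux_cl_and ?_ ?_)) <;> exact isClosed_le (by fun_prop) (by fun_prop)
  have hSm : MeasurableSet {w ∈ R3 | a * (w.1 - t) ≤ b * (w.2 - (1 - t / c))} :=
    aux_ms_and hcl.measurableSet (isClosed_le (by fun_prop) (by fun_prop))
  have hut : 0 ≤ t - xD := by linarith [ht.1]
  have hm : νm {w ∈ R3 | a * (w.1 - t) ≤ b * (w.2 - (1 - t / c))}
      = ENNReal.ofReal (2 / c) * ENNReal.ofReal (t - xD) := by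
    simp only [νm, Measure.smul_apply, smul_eq_mul]
    rw [Measure.restrict_eq_self _ (fun w hw => hw.1)]
    have hne : volume {w ∈ R3 | a * (w.1 - t) ≤ b * (w.2 - (1 - t / c))}
        = ENNReal.ofReal ((t - xD) / 3) := by
      rw [← hvol, measureReal_def, ENNReal.ofReal_toReal]
      apply ne_top_of_le_ne_top (b := volume (Set.Icc (xD, (0:ℝ)) (c, 1)))
      · exact isCompact_Icc.measure_lt_top.ne
      · apply measure_mono
        rw [hR]
        rintro ⟨x, y⟩ ⟨⟨h1, h2, h3, h4⟩, -⟩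
        simp only at h1 h2 h3 h4
        have h6 : x ≤ c := by
          rw [← div_le_one hc0]; linarith
        have : 0 ≤ x / c := div_nonneg (by linarith) hc0.le
        refine ⟨⟨h1, h2⟩, ⟨h6, ?_⟩⟩
        simp only; linarith
    rw [hne, ← ENNReal.ofReal_mul (by positivity), ← ENNReal.ofReal_mul (by positivity)]
    congr 1; ring
  rw [hm]
  simp only [νp]
  rw [Measure.map_apply (by fun_prop) hSm, Measure.smul_apply, smul_eq_mul,
    Measure.restrict_apply' measurableSet_Icc]
  congr 1
  rw [← Real.volume_Icc]
  congr 1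
  ext x
  simp only [Set.mem_inter_iff, Set.mem_preimage, hR, Set.mem_ofPred_eq, Set.mem_Icc]
  have hab' : 0 < a + b / c := by
    rcases ha.lt_or_eq with h | h
    · have : 0 ≤ b / c := by positivity
      linarith
    · have : 0 < b := by linarith
      have : 0 < b / c := by positivity
      linarith
  have hiff : a * (x - t) ≤ b * (1 - x / c - (1 - t / c)) ↔ x ≤ t := by
    have e : b * (1 - x / c - (1 - t / c)) - a * (x - t) = (t - x) * (a + b / c) := by
      field_simp; ring
    rw [← sub_nonneg, e, mul_nonneg_iff_of_pos_right hab', sub_nonneg]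
  rw [hiff]
  constructor
  · rintro ⟨⟨-, h⟩, h1, h2⟩
    exact ⟨h1, h⟩
  · rintro ⟨h1, h2⟩
    have hxc : x ≤ c := h2.trans ht.2
    have h3 : x / c ≤ 1 := (div_le_one hc0).2 hxc
    refine ⟨⟨⟨h1, by linarith, by linarith, ?_⟩, h2⟩, h1, hxc⟩
    have h5 : (x - xD) / c ≤ x - xD := div_le_self (by linarith) (by linarith)
    have hdc : xD / c = 1 - (1 + r) / 3 := by rw [hd]; field_simp
    rw [sub_div] at h5
    linarith
end
end
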